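/- Let α > 0, a ∈ (0, π), b = (2a/α) tan(a/2), and Λ = 8 e^{-b} sin²(a/2). Then the function θ(z) = 2 ln(cos(a z)/cos(a/2)) + b satisfies the non-local equation θ''(z) + Λ e^{-θ(z)} / (∫_{-1/2}^{1/2} e^{-θ(s)} ds)² = 0 for all z ∈ (-1/2, 1/2), together with the Robin boundary conditions θ'(1/2) = -α θ(1/2) and θ'(-1/2) = α θ(-1/2). -/

import Mathlib

open Real Set

/-!
Wherever `cos (a z) ≠ 0` one has `θ' = -2 a tan (a z)`, so `θ'' = -2 a² / cos² (a z)`, while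
`e^{-θ} = e^{-b} cos² (a/2) / cos² (a z)`. Thus `θ` solves a local Liouville equation, and since
`a e^{-θ}` has the primitive `e^{-b} cos² (a/2) tan (a z)`, the integral `I` of `e^{-θ}` over
`[-1/2, 1/2]` satisfies `a I = e^{-b} sin a`. The double-angle formula turns
`Λ = 8 e^{-b} sin² (a/2)` into the constant that makes the local and the non-local equations agree,
and `θ (±1/2) = b` reduces both Robin conditions to `α b = 2 a tan (a/2)`.
-/

lemma sin_eq_two_mul_sin_half_mul_cos_half (x : ℝ) : sin x = 2 * sin (x / 2) * cos (x / 2) := by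
  rw [← sin_two_mul, mul_div_cancel₀ x two_ne_zero]

lemma hasDerivAt_tan_const_mul {a z : ℝ} (hz : cos (a * z) ≠ 0) :
    HasDerivAt (fun s => tan (a * s)) (a / cos (a * z) ^ 2) z :=
  ((hasDerivAt_tan hz).comp z (hasDerivAt_const_mul a)).congr_deriv (by ring)

lemma cos_half_pos_of_mem_Ioo {a : ℝ} (ha : a ∈ Ioo (-π) π) : 0 < cos (a / 2) :=
  cos_pos_of_mem_Ioo ⟨by linarith [ha.1], by linarith [ha.2]⟩

lemma cos_mul_pos_of_mem_Icc {a z : ℝ} (ha : a ∈ Ioo (-π) π)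
    (hz : z ∈ Icc (-(1 : ℝ) / 2) (1 / 2)) :
    0 < cos (a * z) := by
  have ha' : |a| < π := abs_lt.mpr ha
  have hz' : |z| ≤ 1 / 2 := abs_le.mpr ⟨by linarith [hz.1], hz.2⟩
  have haz : |a * z| < π / 2 := by
    rw [abs_mul]
    nlinarith [abs_nonneg a]
  exact cos_pos_of_mem_Ioo (abs_lt.mp haz)

lemma cos_mul_ne_zero_of_mem_uIcc {a : ℝ} (ha : a ∈ Ioo (-π) π) :
    ∀ z ∈ uIcc (-(1 : ℝ) / 2) (1 / 2), cos (a * z) ≠ 0 := fun z hz =>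
  (cos_mul_pos_of_mem_Icc ha (by rwa [uIcc_of_le (by norm_num)] at hz)).ne'

/-- The axial steady-state profile `θ_{a,b}`, normalised so that `θ_{a,b} (±1/2) = b`. As `Real.log`
is `log |·|`, this is also meaningful where the two cosines have opposite signs. -/
noncomputable def axialProfile (a b z : ℝ) : ℝ :=
  2 * log (cos (a * z) / cos (a / 2)) + b

lemma axialProfile_neg (a b z : ℝ) : axialProfile a b (-z) = axialProfile a b z := by
  simp [axialProfile]

lemma axialProfile_one_half (a b : ℝ) : axialProfile a b (1 / 2) = b := by
  rw [axialProfile, mul_one_div, log_div_self, mul_zero, zero_add]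

section Profile

variable {a b z : ℝ}

lemma hasDerivAt_axialProfile (ha : cos (a / 2) ≠ 0) (hz : cos (a * z) ≠ 0) :
    HasDerivAt (axialProfile a b) (-2 * a * tan (a * z)) z := by
  have hcos : HasDerivAt (fun s => cos (a * s)) (-sin (a * z) * a) z :=
    (hasDerivAt_const_mul a).cos
  have hlog := (hcos.div_const (cos (a / 2))).log (div_ne_zero hz ha)
  refine ((hlog.const_mul 2).add_const b).congr_deriv ?_
  rw [tan_eq_sin_div_cos]
  field_simp

lemma deriv_deriv_axialProfile (ha : cos (a / 2) ≠ 0) (hz : cos (a * z) ≠ 0) :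
    deriv (deriv (axialProfile a b)) z = -2 * a ^ 2 / cos (a * z) ^ 2 := by
  have hderiv : deriv (axialProfile a b) =ᶠ[nhds z] fun s => -2 * a * tan (a * s) := by
    have hcont : ContinuousAt (fun s => cos (a * s)) z := by fun_prop
    filter_upwards [hcont.eventually_ne hz] with s hs
    exact (hasDerivAt_axialProfile ha hs).deriv
  rw [hderiv.deriv_eq, ((hasDerivAt_tan_const_mul hz).const_mul (-2 * a)).deriv]
  ring

lemma exp_neg_axialProfile (ha : cos (a / 2) ≠ 0) (hz : cos (a * z) ≠ 0) :
    exp (-axialProfile a b z) = exp (-b) * cos (a / 2) ^ 2 / cos (a * z) ^ 2 := by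
  have hsq : exp (2 * log (cos (a * z) / cos (a / 2))) = (cos (a * z) / cos (a / 2)) ^ 2 := by
    rw [two_mul, exp_add, exp_log_eq_abs (div_ne_zero hz ha), abs_mul_abs_self, sq]
  rw [axialProfile, neg_add, exp_add, exp_neg (2 * _), hsq]
  field_simp

end Profile

section Integral

variable {a b u v : ℝ}

lemma intervalIntegrable_exp_neg_axialProfile (ha : cos (a / 2) ≠ 0)
    (huv : ∀ z ∈ uIcc u v, cos (a * z) ≠ 0) :
    IntervalIntegrable (fun z => exp (-axialProfile a b z)) MeasureTheory.volume u v :=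
  ContinuousOn.intervalIntegrable fun z hz =>
    (hasDerivAt_axialProfile ha (huv z hz)).neg.exp.continuousAt.continuousWithinAt

lemma mul_integral_exp_neg_axialProfile (ha : cos (a / 2) ≠ 0)
    (huv : ∀ z ∈ uIcc u v, cos (a * z) ≠ 0) :
    a * ∫ z in u..v, exp (-axialProfile a b z) =
      exp (-b) * cos (a / 2) ^ 2 * (tan (a * v) - tan (a * u)) := by
  rw [← intervalIntegral.integral_const_mul, mul_sub]
  refine intervalIntegral.integral_eq_sub_of_hasDerivAt
    (f := fun z => exp (-b) * cos (a / 2) ^ 2 * tan (a * z)) (fun z hz => ?_)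
    ((intervalIntegrable_exp_neg_axialProfile ha huv).const_mul a)
  refine ((hasDerivAt_tan_const_mul (huv z hz)).const_mul _).congr_deriv ?_
  rw [exp_neg_axialProfile ha (huv z hz)]
  ring

end Integral

section UnitInterval

variable {a b z : ℝ}

lemma mul_integral_exp_neg_axialProfile_eq_sin (ha : a ∈ Ioo (-π) π) :
    a * ∫ z in (-(1 : ℝ) / 2)..(1 / 2), exp (-axialProfile a b z) = exp (-b) * sin a := by
  have hcos : cos (a / 2) ≠ 0 := (cos_half_pos_of_mem_Ioo ha).ne'
  have hleft : a * (-(1 : ℝ) / 2) = -(a / 2) := by ring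
  rw [mul_integral_exp_neg_axialProfile hcos (cos_mul_ne_zero_of_mem_uIcc ha), mul_one_div, hleft,
    tan_neg, tan_eq_sin_div_cos, sin_eq_two_mul_sin_half_mul_cos_half a]
  field_simp
  ring

lemma integral_exp_neg_axialProfile_pos (ha : a ∈ Ioo (-π) π) :
    0 < ∫ z in (-(1 : ℝ) / 2)..(1 / 2), exp (-axialProfile a b z) :=
  intervalIntegral.intervalIntegral_pos_of_pos
    (intervalIntegrable_exp_neg_axialProfile (cos_half_pos_of_mem_Ioo ha).ne'
      (cos_mul_ne_zero_of_mem_uIcc ha))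
    (fun _ => exp_pos _) (by norm_num)

theorem axialProfile_nonlocal_equation (ha : a ∈ Ioo (-π) π) (hz : cos (a * z) ≠ 0) :
    deriv (deriv (axialProfile a b)) z
      + 8 * exp (-b) * sin (a / 2) ^ 2 * exp (-axialProfile a b z)
        / (∫ s in (-(1 : ℝ) / 2)..(1 / 2), exp (-axialProfile a b s)) ^ 2 = 0 := by
  have hcos : cos (a / 2) ≠ 0 := (cos_half_pos_of_mem_Ioo ha).ne'
  have hI := mul_integral_exp_neg_axialProfile_eq_sin (b := b) ha
  have hI_ne := (integral_exp_neg_axialProfile_pos (b := b) ha).ne'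
  set I := ∫ s in (-(1 : ℝ) / 2)..(1 / 2), exp (-axialProfile a b s)
  have hsource : 8 * exp (-b) * sin (a / 2) ^ 2 * exp (-axialProfile a b z) =
      2 * a ^ 2 / cos (a * z) ^ 2 * I ^ 2 := calc
    _ = 2 * (exp (-b) * sin a) ^ 2 / cos (a * z) ^ 2 := by
      rw [exp_neg_axialProfile hcos hz, sin_eq_two_mul_sin_half_mul_cos_half a]
      ring
    _ = 2 * a ^ 2 / cos (a * z) ^ 2 * I ^ 2 := by
      rw [← hI]
      ring
  rw [deriv_deriv_axialProfile hcos hz, hsource, mul_div_cancel_right₀ _ (pow_ne_zero 2 hI_ne)]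
  ring

end UnitInterval

section Robin

variable {α a b : ℝ}

lemma deriv_axialProfile_one_half (ha : cos (a / 2) ≠ 0) (hb : α * b = 2 * a * tan (a / 2)) :
    deriv (axialProfile a b) (1 / 2) = -α * axialProfile a b (1 / 2) := by
  rw [(hasDerivAt_axialProfile ha (by rwa [mul_one_div])).deriv, axialProfile_one_half, mul_one_div]
  linear_combination hb

lemma deriv_axialProfile_neg_one_half (ha : cos (a / 2) ≠ 0)
    (hb : α * b = 2 * a * tan (a / 2)) :
    deriv (axialProfile a b) (-(1 : ℝ) / 2) = α * axialProfile a b (-(1 : ℝ) / 2) := by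
  have hodd : deriv (axialProfile a b) (-(1 / 2)) = -deriv (axialProfile a b) (1 / 2) := by
    rw [← neg_eq_iff_eq_neg, ← deriv_comp_neg]
    simp only [axialProfile_neg]
  rw [neg_div, hodd, axialProfile_neg, deriv_axialProfile_one_half ha hb, neg_mul, neg_neg]

end Robin

theorem axial_steady_state_voltage_general {α a b : ℝ} (ha : a ∈ Ioo (-π) π)
    (hb : α * b = 2 * a * tan (a / 2)) :
    (∀ z ∈ Ioo (-(1 : ℝ) / 2) (1 / 2),
      deriv (deriv (axialProfile a b)) z
        + 8 * exp (-b) * sin (a / 2) ^ 2 * exp (-axialProfile a b z)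
          / (∫ s in (-(1 : ℝ) / 2)..(1 / 2), exp (-axialProfile a b s)) ^ 2 = 0) ∧
    deriv (axialProfile a b) (1 / 2) = -α * axialProfile a b (1 / 2) ∧
    deriv (axialProfile a b) (-(1 : ℝ) / 2) = α * axialProfile a b (-(1 : ℝ) / 2) := by
  have hcos : cos (a / 2) ≠ 0 := (cos_half_pos_of_mem_Ioo ha).ne'
  exact ⟨fun z hz =>
      axialProfile_nonlocal_equation ha (cos_mul_pos_of_mem_Icc ha (Ioo_subset_Icc_self hz)).ne',
    deriv_axialProfile_one_half hcos hb, deriv_axialProfile_neg_one_half hcos hb⟩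

/-- For α > 0, a ∈ (0, π), b = (2a/α) tan(a/2), and
Λ = 8 e^{-b} sin²(a/2), the function θ(z) = 2 ln(cos(az)/cos(a/2)) + b satisfies the
non-local equation θ'' + Λ e^{-θ}/(∫_{-1/2}^{1/2} e^{-θ})² = 0 on (-1/2, 1/2), with
Robin conditions θ'(1/2) = -α θ(1/2) and θ'(-1/2) = α θ(-1/2). -/
theorem axial_steady_state_voltage (α a b Λ : ℝ) (hα : 0 < α)
    (ha : a ∈ Set.Ioo 0 Real.pi)
    (hb : b = (2 * a / α) * Real.tan (a / 2))
    (hΛ : Λ = 8 * Real.exp (-b) * Real.sin (a / 2) ^ 2)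
    (θ : ℝ → ℝ)
    (hθ : ∀ z : ℝ, θ z = 2 * Real.log (Real.cos (a * z) / Real.cos (a / 2)) + b) :
    (∀ z ∈ Set.Ioo (-(1:ℝ)/2) (1/2),
      deriv (deriv θ) z
        + Λ * Real.exp (-θ z) / (∫ s in (-(1:ℝ)/2)..(1/2), Real.exp (-θ s)) ^ 2 = 0) ∧
    deriv θ (1/2) = -α * θ (1/2) ∧
    deriv θ (-(1:ℝ)/2) = α * θ (-(1:ℝ)/2) := by
  obtain rfl : θ = axialProfile a b := funext hθ
  rw [hΛ]
  exact axial_steady_state_voltage_general ⟨by linarith [ha.1, ha.2], ha.2⟩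
    (by rw [hb]; field_simp)
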